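/- Let ⟨λ,ν⟩ be an ultrabasic block of type X of n that is special as a reduced marked partition. If X = B, then (λ⁻)* ∈ 𝒫_C(n−1) and d_S⟨λ,ν⟩ = (λ⁻)*; if X = C, then (λ⁺)* ∈ 𝒫_B(n+1) and d_S⟨λ,ν⟩ = (λ⁺)*; if X = D, then ((λ⁺)⁻)* ∈ 𝒫_D(n) and d_S⟨λ,ν⟩ = ((λ⁺)⁻)*. In other words, for special ultrabasic blocks the collapse in the formula for d_S on basic blocks is unnecessary. -/

import Mathlib

namespace NilDual

/-- A "partition" is encoded as a multiset of natural numbers (its parts). -/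
abbrev Ptn := Multiset ℕ

/-- All parts are positive. -/
def IsPartition (l : Ptn) : Prop := ∀ a ∈ l, 0 < a

/-- `height l a` is the number of parts of `l` that are ≥ `a`. -/
def height (l : Ptn) (a : ℕ) : ℕ := Multiset.card (l.filter (fun p => a ≤ p))

/-- `psum l j` is the sum of the `j` largest parts of `l`. -/
def psum (l : Ptn) (j : ℕ) : ℕ := ∑ a ∈ Finset.Icc 1 l.sum, min j (height l a)

/-- `Dom l m` means `l ≤ m` in the dominance order. -/
def Dom (l m : Ptn) : Prop := ∀ j : ℕ, psum l j ≤ psum m j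

/-- The transpose (conjugate) partition. -/
def transpose (l : Ptn) : Ptn :=
  Multiset.filter (fun x => 0 < x)
    (Multiset.map (fun a => height l a) (Finset.Icc 1 l.sum).val)

/-- The largest part (0 for the empty partition). -/
def maxPart (l : Ptn) : ℕ := l.sup

/-- The smallest part (0 for the empty partition). -/
noncomputable def minPart (l : Ptn) : ℕ := sInf {a : ℕ | a ∈ l}

/-- `λ⁺`: add 1 to the largest part. -/
def up (l : Ptn) : Ptn := (maxPart l + 1) ::ₘ l.erase (maxPart l)

/-- `λ⁻`: subtract 1 from the smallest part, deleting it if it becomes 0. -/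
noncomputable def down (l : Ptn) : Ptn :=
  if minPart l ≤ 1 then l.erase (minPart l)
  else (minPart l - 1) ::ₘ l.erase (minPart l)

/-- The join `λ ∨ μ = (λ* ∪ μ*)*`. -/
def pjoin (l m : Ptn) : Ptn := transpose (transpose l + transpose m)

/-- `λ₋ = (λ*⁻)*`. -/
noncomputable def lowerStar (l : Ptn) : Ptn := transpose (down (transpose l))

inductive PType | B | C | D
deriving DecidableEq

/-- Parts of this parity must occur with even multiplicity in a partition of type `X`. -/
def badPart : PType → ℕ → Prop
  | PType.B, a => Even a
  | PType.C, a => Odd a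
  | PType.D, a => Even a

/-- Membership in `𝒫_X` (sum unconstrained). -/
def InP (X : PType) (l : Ptn) : Prop :=
  IsPartition l ∧ ∀ a : ℕ, badPart X a → Even (l.count a)

/-- The parity of `n` required for `𝒫_X(n)` to be defined. -/
def sumParity : PType → ℕ → Prop
  | PType.B, n => Odd n
  | PType.C, n => Even n
  | PType.D, n => Even n

/-- `m` is the X-collapse of `l`: `m ∈ 𝒫_X(|l|)`, `m ≤ l` in dominance order, and `m`
dominates every member of `𝒫_X(|l|)` that is dominated by `l`. -/
def IsCollapse (X : PType) (l m : Ptn) : Prop :=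
  InP X m ∧ m.sum = l.sum ∧ Dom m l ∧
    ∀ ν : Ptn, InP X ν → ν.sum = l.sum → Dom ν l → Dom ν m

def CollapseDefined (X : PType) (l : Ptn) : Prop := ∃ m, IsCollapse X l m

open Classical in
/-- The X-collapse `λ_X` (junk value `0` if it does not exist). -/
noncomputable def collapse (X : PType) (l : Ptn) : Ptn :=
  if h : CollapseDefined X l then h.choose else 0

/-- `l` is superior to `m`: smallest part of `l` ≥ largest part of `m`. -/
def Superior (l m : Ptn) : Prop := maxPart m ≤ minPart l

def EvenlySuperior (l m : Ptn) : Prop := ∃ k : ℕ, Even k ∧ maxPart m ≤ k ∧ k ≤ minPart l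

def OddlySuperior (l m : Ptn) : Prop := ∃ k : ℕ, Odd k ∧ maxPart m ≤ k ∧ k ≤ minPart l

/-- The parity required of marked parts in type `X`. -/
def markParity : PType → ℕ → Prop
  | PType.C, a => Even a
  | _, a => Odd a

/-- `(ν, η)` is a marked partition of type `X`, with underlying partition `λ = ν + η`. -/
def IsMarked (X : PType) (nu eta : Ptn) : Prop :=
  InP X (nu + eta) ∧ sumParity X (nu + eta).sum ∧
  (∀ a ∈ nu, nu.count a = 1 ∧ markParity X a) ∧
  ((X = PType.B ∨ X = PType.D) → Even (Multiset.card nu))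

/-- The Sommers duality map `d_S` on marked partitions `(ν, η)`. -/
noncomputable def dS (X : PType) (nu eta : Ptn) : Ptn :=
  match X with
  | PType.B => collapse PType.C (transpose (nu + collapse PType.C (down eta)))
  | PType.C => collapse PType.B (transpose (nu + collapse PType.B (up eta)))
  | PType.D =>
      collapse PType.D (transpose (nu + transpose (collapse PType.D (transpose eta))))

/-- `a` is a markable part of `l` in type `X`. -/
def Markable (X : PType) (l : Ptn) (a : ℕ) : Prop :=
  a ∈ l ∧ markParity X a ∧
    (match X with
     | PType.B => Odd (height l a)
     | PType.C => Even (height l a)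
     | PType.D => Even (height l a))

/-- The marked partition `⟨l, ν⟩` is reduced. -/
def Reduced (X : PType) (l nu : Ptn) : Prop := ∀ a ∈ nu, Markable X l a

/-- The parts entering the definition of a special marked partition:
even of odd height (B), odd of even height (C), even of even height (D). -/
def AntiPart (X : PType) (l : Ptn) (a : ℕ) : Prop :=
  match X with
  | PType.B => Even a ∧ Odd (height l a)
  | PType.C => Odd a ∧ Even (height l a)
  | PType.D => Even a ∧ Even (height l a)

/-- The reduced marked partition `⟨l, ν⟩` is special. -/
def SpecialMP (X : PType) (l nu : Ptn) : Prop :=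
  ∀ a ∈ l, AntiPart X l a → Even (height nu a)

/-- `a` is the largest part of `l` whose height satisfies `P`. -/
def LargestWith (l : Ptn) (P : ℕ → Prop) (a : ℕ) : Prop :=
  a ∈ l ∧ P (height l a) ∧ ∀ b ∈ l, P (height l b) → b ≤ a

/-- Height parity for the top marked part in a basic block. -/
def heightParity : PType → ℕ → Prop
  | PType.B => fun n => Odd n
  | _ => fun n => Even n

/-- A basic block of type `X`. -/
def BasicBlock (X : PType) (nu eta : Ptn) : Prop :=
  IsMarked X nu eta ∧
  ((∃ n1 n2 : ℕ, n1 < n2 ∧ nu = {n2, n1} ∧ n1 = minPart (nu + eta) ∧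
      LargestWith (nu + eta) (heightParity X) n2) ∨
   (X = PType.C ∧ ∃ n2 : ℕ, nu = {n2} ∧ LargestWith (nu + eta) (heightParity X) n2))

/-- An ultrabasic block: a basic block with `n₁ ≤ 1`. -/
def Ultrabasic (X : PType) (nu eta : Ptn) : Prop :=
  BasicBlock X nu eta ∧ (Multiset.card nu = 2 → minPart nu ≤ 1)


/-- `TT l a = ∑ (p - a)`, truncated. -/
def TT (l : Ptn) (a : ℕ) : ℕ := (l.map (fun p => p - a)).sum

/-- `HH l a = ∑ min p a`. -/
def HH (l : Ptn) (a : ℕ) : ℕ := (l.map (fun p => min p a)).sum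

theorem TT_cons (x : ℕ) (l : Ptn) (a : ℕ) : TT (x ::ₘ l) a = (x - a) + TT l a := by simp [TT]
theorem HH_cons (x : ℕ) (l : Ptn) (a : ℕ) : HH (x ::ₘ l) a = min x a + HH l a := by simp [HH]
theorem TT_add (l m : Ptn) (a : ℕ) : TT (l + m) a = TT l a + TT m a := by simp [TT]
theorem HH_add (l m : Ptn) (a : ℕ) : HH (l + m) a = HH l a + HH m a := by simp [HH]
theorem height_cons (x : ℕ) (l : Ptn) (a : ℕ) :
    height (x ::ₘ l) a = (if a ≤ x then 1 else 0) + height l a := by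
  unfold height
  rw [Multiset.filter_cons]; split_ifs <;> simp [add_comm]
theorem height_add (l m : Ptn) (a : ℕ) : height (l + m) a = height l a + height m a := by
  simp [height]
theorem height_zero' (a : ℕ) : height 0 a = 0 := by simp [height]

theorem TT_add_HH (l : Ptn) (a : ℕ) : TT l a + HH l a = l.sum := by
  induction l using Multiset.induction_on with
  | empty => simp [TT, HH]
  | cons x l ih => rw [TT_cons, HH_cons, Multiset.sum_cons]; omega

theorem TT_succ (l : Ptn) (a : ℕ) : height l (a + 1) + TT l (a + 1) = TT l a := by
  induction l using Multiset.induction_on with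
  | empty => simp [TT, height]
  | cons x l ih => rw [TT_cons, TT_cons, height_cons]; split_ifs <;> omega

theorem HH_succ (l : Ptn) (a : ℕ) : HH l a + height l (a + 1) = HH l (a + 1) := by
  have h1 := TT_succ l a
  have h2 := TT_add_HH l a
  have h3 := TT_add_HH l (a + 1)
  omega

theorem HH_zero (l : Ptn) : HH l 0 = 0 := by simp [HH]

theorem TT_zero (l : Ptn) : TT l 0 = l.sum := by simp [TT]

theorem height_succ (l : Ptn) (a : ℕ) : height l a = height l (a + 1) + l.count a := by
  induction l using Multiset.induction_on with
  | empty => simp [height]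
  | cons x l ih =>
    rw [height_cons, height_cons, Multiset.count_cons]; split_ifs <;> omega

theorem height_anti (l : Ptn) {a b : ℕ} (h : a ≤ b) : height l b ≤ height l a := by
  induction l using Multiset.induction_on with
  | empty => simp [height]
  | cons x l ih =>
    rw [height_cons, height_cons]; split_ifs <;> omega

theorem TT_eq_zero (l : Ptn) {a : ℕ} (h : ∀ p ∈ l, p ≤ a) : TT l a = 0 := by
  unfold TT
  rw [Multiset.sum_eq_zero_iff]
  intro x hx
  rw [Multiset.mem_map] at hx
  obtain ⟨p, hp, rfl⟩ := hx
  have := h p hp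
  omega

theorem TT_large (l : Ptn) {a : ℕ} (h : l.sum ≤ a) : TT l a = 0 :=
  TT_eq_zero l fun _ hp => (Multiset.le_sum_of_mem hp).trans h

theorem height_eq_zero (l : Ptn) {a : ℕ} (h : ∀ p ∈ l, p < a) : height l a = 0 := by
  unfold height
  rw [Multiset.card_eq_zero, Multiset.filter_eq_nil]
  intro p hp
  have := h p hp
  omega

theorem height_large (l : Ptn) {a : ℕ} (h : l.sum < a) : height l a = 0 :=
  height_eq_zero l fun _ hp => (Multiset.le_sum_of_mem hp).trans_lt h

/-- Convexity. -/
theorem TT_second (l : Ptn) (a : ℕ) :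
    TT l a + TT l (a + 2) = 2 * TT l (a + 1) + l.count (a + 1) := by
  have h1 := TT_succ l a
  have h2 := TT_succ l (a + 1)
  have h3 := height_succ l (a + 1)
  simp only [add_assoc, Nat.reduceAdd] at *
  omega

theorem ptn_ext {l m : Ptn} (hl : IsPartition l) (hm : IsPartition m)
    (h : ∀ a, HH l a = HH m a) : l = m := by
  have hh : ∀ a, height l (a + 1) = height m (a + 1) := by
    intro a
    have := HH_succ l a
    have := HH_succ m a
    have := h a
    have := h (a + 1)
    omega
  ext a
  rcases a with _ | a
  · rw [Multiset.count_eq_zero_of_notMem, Multiset.count_eq_zero_of_notMem]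
    · intro h0; exact absurd (hm 0 h0) (by simp)
    · intro h0; exact absurd (hl 0 h0) (by simp)
  · have := height_succ l (a + 1)
    have := height_succ m (a + 1)
    have := hh a
    have := hh (a + 1)
    omega

theorem sum_height (l : Ptn) (a : ℕ) : ∑ b ∈ Finset.Icc 1 a, height l b = HH l a := by
  induction a with
  | zero => simp [HH_zero]
  | succ a ih => rw [Finset.sum_Icc_succ_top (by omega), ih, HH_succ]

theorem psum_eq_of_le (l : Ptn) {N : ℕ} (hN : l.sum ≤ N) (j : ℕ) :
    psum l j = ∑ b ∈ Finset.Icc 1 N, min j (height l b) := by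
  unfold psum
  apply Finset.sum_subset
  · intro x hx; simp only [Finset.mem_Icc] at *; omega
  · intro x hx hx'
    simp only [Finset.mem_Icc] at *
    rw [height_large l (by omega)]; simp

/-- partial version of the minimum formula -/
theorem partial_min (l : Ptn) (j a N : ℕ) :
    ∑ b ∈ Finset.Icc 1 N, min j (height l b) + HH l (min a N) ≤ j * (min a N) + HH l N := by
  induction N with
  | zero => simp
  | succ N ih =>
    rw [Finset.sum_Icc_succ_top (by omega)]
    have h1 := HH_succ l N
    rcases Nat.lt_or_ge N a with h | h
    · rw [min_eq_right (by omega : N + 1 ≤ a)]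
      rw [min_eq_right (by omega : N ≤ a)] at ih
      have : j * (N + 1) = j * N + j := by ring
      have := min_le_left j (height l (N + 1))
      omega
    · rw [min_eq_left (by omega : a ≤ N + 1)]
      rw [min_eq_left (by omega : a ≤ N)] at ih
      have := min_le_right j (height l (N + 1))
      omega

theorem psum_le (l : Ptn) (j a : ℕ) : psum l j ≤ j * a + TT l a := by
  have h := partial_min l j a (l.sum + a)
  rw [min_eq_left (by omega), ← psum_eq_of_le l (by omega)] at h
  have h1 := TT_add_HH l a
  have h2 := TT_add_HH l (l.sum + a)
  omega

theorem partial_min_eq (l : Ptn) (j a N : ℕ) (h1 : a = 0 ∨ j ≤ height l a)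
    (h2 : height l (a + 1) ≤ j) :
    ∑ b ∈ Finset.Icc 1 N, min j (height l b) + HH l (min a N) = j * (min a N) + HH l N := by
  induction N with
  | zero => simp
  | succ N ih =>
    rw [Finset.sum_Icc_succ_top (by omega)]
    have h3 := HH_succ l N
    rcases Nat.lt_or_ge N a with h | h
    · rw [min_eq_right (by omega : N + 1 ≤ a)]
      rw [min_eq_right (by omega : N ≤ a)] at ih
      have : j * (N + 1) = j * N + j := by ring
      have := height_anti l (by omega : N + 1 ≤ a)
      have := min_eq_left (by omega : j ≤ (height l (N + 1)))
      omega
    · rw [min_eq_left (by omega : a ≤ N + 1)]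
      rw [min_eq_left (by omega : a ≤ N)] at ih
      have := height_anti l (by omega : a + 1 ≤ N + 1)
      have := min_eq_right (by omega : (height l (N + 1)) ≤ j)
      omega

theorem psum_eq (l : Ptn) (j a : ℕ) (h1 : a = 0 ∨ j ≤ height l a)
    (h2 : height l (a + 1) ≤ j) : psum l j = j * a + TT l a := by
  have h := partial_min_eq l j a (l.sum + a) h1 h2
  rw [min_eq_left (by omega), ← psum_eq_of_le l (by omega)] at h
  have h1 := TT_add_HH l a
  have h2 := TT_add_HH l (l.sum + a)
  have h3 := TT_large l (by omega : l.sum ≤ l.sum + a)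
  omega

theorem exists_psum_eq (l : Ptn) (j : ℕ) : ∃ a, psum l j = j * a + TT l a := by
  have hex : ∃ a, height l (a + 1) ≤ j := ⟨l.sum, by rw [height_large l (by omega)]; omega⟩
  classical
  refine ⟨Nat.find hex, psum_eq l j _ ?_ (Nat.find_spec hex)⟩
  by_cases h0 : Nat.find hex = 0
  · exact Or.inl h0
  · right
    have := Nat.find_min hex (m := Nat.find hex - 1) (by omega)
    rw [Nat.sub_add_cancel (by omega)] at this
    omega

/-- Transpose facts. -/
theorem HH_transpose (l : Ptn) (j : ℕ) : HH (transpose l) j = psum l j := by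
  have key : ∀ s : Multiset ℕ, ((s.filter (fun x => 0 < x)).map (fun p => min p j)).sum
      = (s.map (fun p => min p j)).sum := by
    intro s
    induction s using Multiset.induction_on with
    | empty => simp
    | cons x s ih =>
      rw [Multiset.filter_cons]
      split_ifs with hx
      · simp [ih]
      · have : x = 0 := by omega
        simp [ih, this]
  unfold HH transpose psum
  rw [key, Multiset.map_map]
  simp only [Function.comp_def, min_comm]
  rfl

theorem psum_large (l : Ptn) {j : ℕ} (h : height l 1 ≤ j) : psum l j = l.sum := by
  rw [psum_eq l j 0 (Or.inl rfl) h, TT_zero]; simp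

theorem sum_transpose (l : Ptn) : (transpose l).sum = l.sum := by
  have h1 := TT_add_HH (transpose l) ((transpose l).sum + height l 1)
  rw [TT_large _ (by omega), HH_transpose, psum_large l (by omega)] at h1
  omega

theorem isPartition_transpose (l : Ptn) : IsPartition (transpose l) := by
  intro a ha
  unfold transpose at ha
  rw [Multiset.mem_filter] at ha
  exact ha.2

theorem TT_transpose (l : Ptn) (k : ℕ) : TT (transpose l) k + psum l k = l.sum := by
  rw [← HH_transpose, TT_add_HH, sum_transpose]

theorem height_transpose (l : Ptn) {k : ℕ} (hk : 0 < k) :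
    height (transpose l) k = ((Finset.Icc 1 l.sum).filter (fun b => k ≤ height l b)).card := by
  unfold height transpose
  rw [Multiset.filter_filter, Multiset.filter_map, Multiset.card_map]
  have : ∀ b : ℕ, ((fun a => k ≤ a ∧ 0 < a) ∘ fun a => height l a) b ↔ k ≤ height l b := by
    intro b; simp only [Function.comp]; omega
  rw [Multiset.filter_congr (fun b _ => this b)]
  rfl

theorem psum_transpose (l : Ptn) (j : ℕ) : psum (transpose l) j = HH l j := by
  rcases Nat.eq_zero_or_pos j with rfl | hj
  · simp [psum, HH_zero]
  have hT : HH l j = j * height l j + TT (transpose l) (height l j) := by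
    have h1 := psum_eq l (height l j) j (Or.inr le_rfl) (height_anti l (by omega))
    have h2 := TT_transpose l (height l j)
    have h3 := TT_add_HH l j
    have : height l j * j = j * height l j := mul_comm _ _
    omega
  rw [hT]
  apply psum_eq
  · rcases Nat.eq_zero_or_pos (height l j) with h0 | h0
    · exact Or.inl h0
    · right
      rw [height_transpose l h0]
      have hjN : j ≤ l.sum := by
        by_contra hc
        rw [height_large l (by omega)] at h0; omega
      calc j = (Finset.Icc 1 j).card := by simp
        _ ≤ _ := by
          apply Finset.card_le_card
          intro b hb
          simp only [Finset.mem_Icc, Finset.mem_filter] at *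
          exact ⟨by omega, height_anti l hb.2⟩
  · rw [height_transpose l (by omega)]
    calc _ ≤ (Finset.Icc 1 j).card := by
          apply Finset.card_le_card
          intro b hb
          simp only [Finset.mem_Icc, Finset.mem_filter] at *
          refine ⟨hb.1.1, ?_⟩
          by_contra hc
          have := height_anti l (by omega : j ≤ b)
          omega
      _ = j := by simp

theorem transpose_transpose {l : Ptn} (hl : IsPartition l) : transpose (transpose l) = l :=
  ptn_ext (isPartition_transpose _) hl fun a => by rw [HH_transpose, psum_transpose]

theorem dom_transpose (l m : Ptn) :
    Dom (transpose l) (transpose m) ↔ ∀ j, HH l j ≤ HH m j := by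
  simp only [Dom, psum_transpose]

theorem dom_of_TT {l m : Ptn} (h : ∀ a, TT l a ≤ TT m a) : Dom l m := by
  intro j
  obtain ⟨a, ha⟩ := exists_psum_eq m j
  have := psum_le l j a
  have := h a
  omega

theorem TT_of_dom {l m : Ptn} (hs : l.sum = m.sum) (h : Dom l m) (a : ℕ) : TT l a ≤ TT m a := by
  have h1 : Dom (transpose m) (transpose l) := by
    apply dom_of_TT
    intro k
    have := TT_transpose l k
    have := TT_transpose m k
    have := h k
    omega
  have h2 := (dom_transpose m l).1 h1 a
  have := TT_add_HH l a
  have := TT_add_HH m a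
  omega

theorem dom_antisymm {l m : Ptn} (hl : IsPartition l) (hm : IsPartition m)
    (h : Dom l m) (h' : Dom m l) : l = m := by
  have : transpose l = transpose m :=
    ptn_ext (isPartition_transpose _) (isPartition_transpose _) fun a => by
      rw [HH_transpose, HH_transpose]; exact le_antisymm (h a) (h' a)
  rw [← transpose_transpose hl, this, transpose_transpose hm]

theorem collapse_eq {X : PType} {l m : Ptn} (h : IsCollapse X l m) : collapse X l = m := by
  have hd : CollapseDefined X l := ⟨m, h⟩
  have hc := hd.choose_spec
  unfold collapse
  rw [dif_pos hd]
  exact dom_antisymm hc.1.1 h.1.1 (h.2.2.2 _ hc.1 hc.2.1 hc.2.2.1)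
    (hc.2.2.2 _ h.1 h.2.1 h.2.2.1)

/-- Parity class in which `TT` is even. -/
def eX : PType → ℕ
  | PType.B => 1
  | PType.C => 0
  | PType.D => 1

theorem badPart_iff (X : PType) (a : ℕ) : badPart X a ↔ a % 2 ≠ eX X := by
  cases X <;> simp [badPart, eX, Nat.even_iff, Nat.odd_iff]

theorem eX_lt (X : PType) : eX X < 2 := by cases X <;> simp [eX]

theorem InP_iff (X : PType) (l : Ptn) :
    InP X l ↔ IsPartition l ∧ ∀ a, a % 2 = eX X → TT l a % 2 = 0 := by
  unfold InP
  refine and_congr_right fun hl => ?_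
  simp only [badPart_iff, Nat.even_iff]
  have he := eX_lt X
  constructor
  · intro h a ha
    have key : ∀ k, TT l (a + 2 * k) % 2 = TT l a % 2 := by
      intro k
      induction k with
      | zero => rfl
      | succ k ih =>
        have h1 := TT_second l (a + 2 * k)
        have h2 := h (a + 2 * k + 1) (by omega)
        rw [show a + 2 * (k + 1) = a + 2 * k + 2 by ring]
        omega
    rw [← key l.sum, TT_large l (by omega)]
  · intro h a ha
    rcases a with _ | a
    · rw [Multiset.count_eq_zero_of_notMem]
      intro h0; exact absurd (hl 0 h0) (by simp)
    · have h1 := TT_second l a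
      have h2 := h a (by omega)
      have h3 := h (a + 2) (by omega)
      omega

/-- Realising a convex function. -/
theorem exists_of_convex (N : ℕ) : ∀ f : ℕ → ℕ, (∀ a, N ≤ a → f a = 0) →
    (∀ a, 2 * f (a + 1) ≤ f a + f (a + 2)) → ∃ l : Ptn, IsPartition l ∧ ∀ a, TT l a = f a := by
  induction N with
  | zero => intro f h _; exact ⟨0, by simp [IsPartition], fun a => by simp [TT, h a]⟩
  | succ N ih =>
    intro f h hc
    obtain ⟨l, hl, hT⟩ := ih (fun a => f (a + 1)) (fun a ha => h _ (by omega))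
      (fun a => hc (a + 1))
    have h1 : ∀ (l : Ptn) a, TT (l.map (· + 1)) (a + 1) = TT l a := by
      intro l a; simp [TT]
    have h0 : ∀ (l : Ptn), IsPartition l → TT (l.map (· + 1)) 0 = TT l 0 + height l 1 := by
      intro l hl
      have : height l 1 = Multiset.card l := by
        unfold height
        rw [Multiset.filter_eq_self.2]
        intro p hp; exact hl p hp
      simp [TT, this]
    refine ⟨l.map (· + 1) + Multiset.replicate (f 0 + f 2 - 2 * f 1) 1, ?_, ?_⟩
    · intro a ha
      rw [Multiset.mem_add, Multiset.mem_map] at ha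
      rcases ha with ⟨p, _, rfl⟩ | ha
      · omega
      · rw [Multiset.eq_of_mem_replicate ha]; omega
    · intro a
      rw [TT_add]
      rcases a with _ | a
      · rw [h0 l hl]
        have h2 := TT_succ l 0
        have h3 := hT 0
        have h4 := hT 1
        have h5 := hc 0
        have h6 : TT (Multiset.replicate (f 0 + f 2 - 2 * f 1) 1) 0 = f 0 + f 2 - 2 * f 1 := by
          simp [TT]
        simp only [zero_add, Nat.reduceAdd] at *
        omega
      · rw [h1, hT]
        simp [TT]

/-- The collapse at the level of `TT`. -/
def GG (e : ℕ) (f : ℕ → ℕ) (a : ℕ) : ℕ :=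
  if a % 2 = e then 2 * (f a / 2) else if a = 0 then f 0
  else min (f a) (f (a - 1) / 2 + f (a + 1) / 2)

theorem GG_convex (e : ℕ) (he : e < 2) (f : ℕ → ℕ) (hc : ∀ a, 2 * f (a + 1) ≤ f a + f (a + 2))
    (a : ℕ) : 2 * GG e f (a + 1) ≤ GG e f a + GG e f (a + 2) := by
  by_cases h : (a + 1) % 2 = e
  · have h1 : ¬ (a % 2 = e) := by omega
    have h2 : ¬ ((a + 2) % 2 = e) := by omega
    have c1 := hc a
    have c2 := hc (a + 1)
    unfold GG
    rw [if_pos h, if_neg h1, if_neg h2]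
    rcases a with _ | a
    · simp only [zero_add, Nat.reduceAdd, Nat.reduceSub, if_true, if_neg (by decide : ¬ (2 = 0))] at *
      omega
    · have c3 := hc a
      rw [if_neg (by omega), if_neg (by omega)]
      simp only [add_assoc, Nat.reduceAdd, Nat.add_sub_cancel] at *
      rw [show a + 3 - 1 = a + 2 by omega]
      omega
  · have h1 : (a % 2 = e) := by omega
    have h2 : ((a + 2) % 2 = e) := by omega
    unfold GG
    rw [if_neg h, if_pos h1, if_pos h2, if_neg (by omega), Nat.add_sub_cancel,
      show a + 1 + 1 = a + 2 by ring]
    omega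

theorem exists_collapse (X : PType) (l : Ptn) (hs : eX X = 0 → l.sum % 2 = 0) :
    ∃ m, collapse X l = m ∧ InP X m ∧ m.sum = l.sum ∧ ∀ a, TT m a = GG (eX X) (TT l) a := by
  have hconv : ∀ a, 2 * TT l (a + 1) ≤ TT l a + TT l (a + 2) := by
    intro a; have := TT_second l a; omega
  obtain ⟨m, hm, hT⟩ := exists_of_convex (l.sum + 1) (GG (eX X) (TT l))
    (by
      intro a ha
      have h1 := TT_large l (by omega : l.sum ≤ a)
      unfold GG
      split_ifs
      · omega
      · omega
      · rw [h1]; simp) (GG_convex _ (eX_lt X) _ hconv)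
  have hsum : m.sum = l.sum := by
    rw [← TT_zero m, hT 0, ← TT_zero l]
    unfold GG
    rw [← TT_zero l] at hs
    split_ifs with h0
    · have := hs (by omega); omega
    · rfl
    · omega
  have hP : InP X m := by
    rw [InP_iff]
    refine ⟨hm, fun a ha => ?_⟩
    rw [hT a]; unfold GG; rw [if_pos ha]; omega
  have hle : ∀ a, TT m a ≤ TT l a := by
    intro a
    rw [hT a]; unfold GG
    split_ifs with h1 h2
    · omega
    · rw [h2]
    · exact min_le_left _ _
  refine ⟨m, collapse_eq ⟨hP, hsum, dom_of_TT hle, ?_⟩, hP, hsum, hT⟩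
  intro v hv hvs hvd
  have hvT := TT_of_dom hvs hvd
  rw [InP_iff] at hv
  apply dom_of_TT
  intro a
  rw [hT a]
  have he := eX_lt X
  unfold GG
  split_ifs with h1 h2
  · have := hv.2 a h1; have := hvT a; omega
  · rw [h2]; exact hvT 0
  · have e1 := hv.2 (a - 1) (by omega)
    have e2 := hv.2 (a + 1) (by omega)
    have e3 := TT_second v (a - 1)
    have e4 := hvT (a - 1)
    have e5 := hvT (a + 1)
    have e6 := hvT a
    rw [show a - 1 + 2 = a + 1 by omega, show a - 1 + 1 = a by omega] at e3
    omega

theorem HH_transpose_TT (l : Ptn) {j k : ℕ} (h1 : j = 0 ∨ k ≤ height l j)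
    (h2 : height l (j + 1) ≤ k) : TT (transpose l) k + k * j = HH l j := by
  have h3 := psum_eq l k j h1 h2
  have h4 := TT_transpose l k
  have h5 := TT_add_HH l j
  omega

/-- corner criterion -/
theorem corner (X : PType) {t : Ptn} (ht : InP X (transpose t)) {j : ℕ}
    (hj : height t (j + 1) < height t j) : (HH t j + eX X * j) % 2 = 0 := by
  rw [InP_iff] at ht
  have he := eX_lt X
  obtain ⟨k, hk1, hk2, hk3⟩ : ∃ k, k ≤ height t j ∧ height t (j + 1) ≤ k ∧ k % 2 = eX X := by
    by_cases h : height t j % 2 = eX X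
    · exact ⟨_, le_rfl, hj.le, h⟩
    · exact ⟨height t j - 1, by omega, by omega, by omega⟩
  have h1 := HH_transpose_TT t (Or.inr hk1) hk2
  have h2 := ht.2 k hk3
  have h3 : (k * j) % 2 = (eX X * j) % 2 := by rw [← hk3]; simp [Nat.mul_mod]
  omega

theorem corner_conv (X : PType) {t : Ptn}
    (h : ∀ j ∈ t, 0 < j → (HH t j + eX X * j) % 2 = 0) : InP X (transpose t) := by
  rw [InP_iff]
  refine ⟨isPartition_transpose t, fun k hk => ?_⟩
  have hex : ∃ a, height t (a + 1) ≤ k := ⟨t.sum, by rw [height_large t (by omega)]; omega⟩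
  classical
  set j := Nat.find hex with hjdef
  have hj1 := Nat.find_spec hex
  rw [← hjdef] at hj1
  by_cases h0 : j = 0
  · have h1 := HH_transpose_TT t (Or.inl h0) hj1
    rw [h0, HH_zero] at h1
    omega
  · have h2 := Nat.find_min hex (m := j - 1) (by omega)
    rw [Nat.sub_add_cancel (by omega)] at h2
    have h1 := HH_transpose_TT t (j := j) (k := k) (Or.inr (by omega)) hj1
    have hmem : j ∈ t := by
      rw [← Multiset.count_pos]
      have := height_succ t j
      omega
    have h3 := h j hmem (by omega)
    have h4 : (k * j) % 2 = (eX X * j) % 2 := by rw [← hk]; simp [Nat.mul_mod]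
    omega

theorem outer (X : PType) {k t : Ptn} (ht : InP X (transpose t)) (hs : t.sum = k.sum)
    (hle : ∀ j, HH t j ≤ HH k j)
    (hmax : ∀ s : Ptn, s.sum = k.sum →
      (∀ j, height s (j + 1) < height s j → (HH s j + eX X * j) % 2 = 0) →
      (∀ j, HH s j ≤ HH k j) → ∀ j, HH s j ≤ HH t j) :
    collapse X (transpose k) = transpose t := by
  apply collapse_eq
  refine ⟨ht, by rw [sum_transpose, sum_transpose, hs], (dom_transpose _ _).2 hle, ?_⟩
  intro v hv hvs hvd
  have hvt := transpose_transpose hv.1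
  rw [sum_transpose] at hvs
  rw [← hvt] at hvd hv ⊢
  rw [dom_transpose] at hvd ⊢
  exact hmax _ (by rw [sum_transpose, hvs]) (fun j hj => corner X hv hj) hvd

theorem maxPart_ge (l : Ptn) : ∀ p ∈ l, p ≤ maxPart l := fun _ hp => Multiset.le_sup hp

theorem maxPart_mem {l : Ptn} (h : l ≠ 0) : maxPart l ∈ l := by
  induction l using Multiset.induction_on with
  | empty => exact absurd rfl h
  | cons x l ih =>
    unfold maxPart at *
    rw [Multiset.sup_cons]
    by_cases hl : l = 0
    · subst hl; simp
    · rcases le_total x l.sup with h1 | h1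
      · rw [sup_eq_right.2 h1]; exact Multiset.mem_cons_of_mem (ih hl)
      · rw [sup_eq_left.2 h1]; exact Multiset.mem_cons_self _ _

theorem minPart_le {l : Ptn} {p : ℕ} (hp : p ∈ l) : minPart l ≤ p := Nat.sInf_le hp

theorem minPart_mem {l : Ptn} (h : l ≠ 0) : minPart l ∈ l := by
  obtain ⟨a, ha⟩ := Multiset.exists_mem_of_ne_zero h
  exact Nat.sInf_mem (s := {a : ℕ | a ∈ l}) ⟨a, ha⟩

theorem minPart_eq {l : Ptn} {a : ℕ} (h : a ∈ l) (h' : ∀ p ∈ l, a ≤ p) : minPart l = a :=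
  le_antisymm (minPart_le h) (h' _ (minPart_mem (by rintro rfl; simp at h)))

theorem TT_up {l : Ptn} (h : l ≠ 0) (a : ℕ) :
    TT (up l) a = TT l a + if a ≤ maxPart l then 1 else 0 := by
  have h1 : TT l a = _ := congrArg (fun m => TT m a) (Multiset.cons_erase (maxPart_mem h)).symm
  unfold up
  rw [TT_cons] at h1 ⊢
  rw [h1]
  split_ifs <;> omega

theorem TT_down {l : Ptn} (h : l ≠ 0) (hp : IsPartition l) (a : ℕ) :
    TT (down l) a + (if a < minPart l then 1 else 0) = TT l a := by
  have h0 := hp _ (minPart_mem h)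
  have h1 : TT l a = _ := congrArg (fun m => TT m a) (Multiset.cons_erase (minPart_mem h)).symm
  unfold down
  rw [TT_cons] at h1
  rw [h1]
  split_ifs
  · omega
  · omega
  · rw [TT_cons]; omega
  · rw [TT_cons]; omega

theorem mem_up {l : Ptn} {j : ℕ} (h : j ∈ up l) : j = maxPart l + 1 ∨ j ∈ l := by
  unfold up at h
  rw [Multiset.mem_cons] at h
  exact h.imp id Multiset.mem_of_mem_erase

theorem mem_down_one {l : Ptn} (hmin : minPart l = 1) {j : ℕ} (h : j ∈ down l) : j ∈ l := by
  unfold down at h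
  rw [if_pos (by omega)] at h
  exact Multiset.mem_of_mem_erase h

theorem exists_part (l : Ptn) (k : ℕ) : ∀ c, l.sum + 1 ≤ c + k → 0 < height l c →
    ∃ b ∈ l, c ≤ b ∧ height l b = height l c := by
  induction k with
  | zero => intro c hc h0; rw [height_large l (by omega)] at h0; omega
  | succ k ih =>
    intro c hc h0
    by_cases hm : c ∈ l
    · exact ⟨c, hm, le_rfl, rfl⟩
    · have h1 := height_succ l c
      rw [Multiset.count_eq_zero_of_notMem hm] at h1
      obtain ⟨b, hb, hcb, h2⟩ := ih (c + 1) (by omega) (by omega)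
      exact ⟨b, hb, by omega, by omega⟩

theorem height_above {l : Ptn} {P : ℕ → Prop} {n : ℕ} (h : LargestWith l P n) {c : ℕ}
    (hc : n < c) (h0 : 0 < height l c) : ¬ P (height l c) := by
  obtain ⟨b, hb, hcb, h2⟩ := exists_part l (l.sum + 1) c (by omega) h0
  intro hP
  have := h.2.2 b hb (by rw [h2]; exact hP)
  omega

theorem height_pos {l : Ptn} {a c : ℕ} (ha : a ∈ l) (h : c ≤ a) : 0 < height l c := by
  have h1 := height_anti l h
  have h2 := height_succ l a
  have h3 := Multiset.count_pos.2 ha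
  omega

/-- parity of `TT` above `n₂` when heights have constant parity -/
theorem TT_parity_odd (l : Ptn) (m k : ℕ) (hm : TT l m = 0) : ∀ j, j + k = m →
    (∀ c, j < c → c ≤ m → height l c % 2 = 1) → TT l j % 2 = k % 2 := by
  induction k with
  | zero => intro j hj _; rw [show j = m by omega, hm]
  | succ k ih =>
    intro j hj hc
    have h1 := ih (j + 1) (by omega) (fun c h1 h2 => hc c (by omega) h2)
    have h2 := TT_succ l j
    have h3 := hc (j + 1) (by omega) (by omega)
    omega

theorem TT_parity_even (l : Ptn) (m k : ℕ) (hm : TT l m = 0) : ∀ j, j + k = m →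
    (∀ c, j < c → height l c % 2 = 0) → TT l j % 2 = 0 := by
  induction k with
  | zero => intro j hj _; rw [show j = m by omega, hm]
  | succ k ih =>
    intro j hj hc
    have h1 := ih (j + 1) (by omega) (fun c h1 => hc c (by omega))
    have h2 := TT_succ l j
    have h3 := hc (j + 1) (by omega)
    omega

theorem TT_low (l : Ptn) (j : ℕ) (h : ∀ p ∈ l, j ≤ p) :
    TT l j + j * Multiset.card l = l.sum := by
  induction l using Multiset.induction_on with
  | empty => simp [TT]
  | cons x l ih =>
    have h1 := ih fun p hp => h p (Multiset.mem_cons_of_mem hp)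
    have h2 := h x (Multiset.mem_cons_self _ _)
    rw [TT_cons, Multiset.card_cons, Multiset.sum_cons, Nat.mul_succ]
    omega

theorem height_one {l : Ptn} (h : IsPartition l) : height l 1 = Multiset.card l := by
  unfold height
  rw [Multiset.filter_eq_self.2]
  intro p hp; exact h p hp

theorem GG_ge (e : ℕ) (l : Ptn) (a : ℕ) : TT l a ≤ GG e (TT l) a + 1 := by
  unfold GG
  split_ifs with h1 h2
  · omega
  · subst h2; omega
  · have := TT_second l (a - 1)
    rw [show a - 1 + 2 = a + 1 by omega, show a - 1 + 1 = a by omega] at this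
    omega

theorem GG_le (e : ℕ) (f : ℕ → ℕ) (a : ℕ) : GG e f a ≤ f a := by
  unfold GG
  split_ifs with h1 h2
  · omega
  · subst h2; omega
  · omega

theorem GG_even (e : ℕ) (f : ℕ → ℕ) (a : ℕ) (h : a % 2 = e) (h' : f a % 2 = 0) :
    GG e f a = f a := by
  unfold GG
  rw [if_pos h]; omega

/-- Type B. -/
theorem typeB (nu eta : Ptn) (n2 : ℕ) (hn : 1 < n2) (hnu : nu = {n2, 1})
    (hP : InP PType.B (nu + eta)) (hsum : (nu + eta).sum % 2 = 1)
    (hodd : n2 % 2 = 1) (hht1 : height (nu + eta) 1 % 2 = 1)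
    (hL : LargestWith (nu + eta) Odd n2)
    (hsp : ∀ a ∈ nu + eta, a % 2 = 0 → a ≤ n2 → height (nu + eta) a % 2 = 0) :
    InP PType.C (transpose (down (nu + eta))) ∧
      (transpose (down (nu + eta))).sum = (nu + eta).sum - 1 ∧
      dS PType.B nu eta = transpose (down (nu + eta)) := by
  have hTl : ∀ a, TT (nu + eta) a = (n2 - a) + (1 - a) + TT eta a := by
    intro a; rw [TT_add, hnu]; simp [TT]
  have hPart := hP.1
  have hPeta : IsPartition eta := fun a ha => hPart a (Multiset.mem_add.2 (Or.inr ha))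
  have hTodd : ∀ a, a % 2 = 1 → TT (nu + eta) a % 2 = 0 := ((InP_iff _ _).1 hP).2
  have h1mem : 1 ∈ nu + eta := by rw [hnu]; simp
  have hcard : Multiset.card eta % 2 = 1 := by
    rw [height_one hPart, Multiset.card_add, hnu] at hht1
    simp at hht1; omega
  set l := nu + eta with hl
  have hl0 : l ≠ 0 := by rintro h; rw [h] at h1mem; simp at h1mem
  have he0 : eta ≠ 0 := by rintro h; rw [h] at hcard; simp at hcard
  have hmin : minPart l = 1 := minPart_eq h1mem hPart
  have hTt := TT_down hl0 hPart
  rw [hmin] at hTt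
  have hTt0 : (down l).sum + 1 = l.sum := by
    have := hTt 0; rw [TT_zero, TT_zero] at this; simpa using this
  have hTt1 : ∀ j, 1 ≤ j → TT (down l) j = TT l j := by
    intro j hj; have := hTt j; rw [if_neg (by omega)] at this; omega
  have habove : ∀ j, n2 ≤ j → TT l j % 2 = 0 := by
    intro j hj
    apply TT_parity_even l (j + l.sum) l.sum (TT_large l (by omega)) j rfl
    intro c hc
    by_contra hh
    exact height_above hL (by omega : n2 < c) (by omega) (Nat.odd_iff.2 (by omega))
  have hIn : InP PType.C (transpose (down l)) := by
    apply corner_conv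
    intro j hj hj0
    have hjl := mem_down_one hmin hj
    have h1 := TT_add_HH (down l) j
    rw [hTt1 j hj0] at h1
    have h2 : TT l j % 2 = 0 := by
      by_cases hpar : j % 2 = 1
      · exact hTodd j hpar
      · by_cases hle : j ≤ n2
        · have h3 := hsp j hjl (by omega) hle
          have h4 := hTodd (j - 1) (by omega)
          have h5 := TT_succ l (j - 1)
          rw [Nat.sub_add_cancel hj0] at h5
          omega
        · exact habove j (by omega)
    simp only [eX]
    omega
  refine ⟨hIn, by rw [sum_transpose]; omega, ?_⟩
  have hmu := TT_down he0 hPeta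
  have hmpos := hPeta _ (minPart_mem he0)
  have hsume : l.sum = n2 + 1 + eta.sum := by
    have := hTl 0; rw [TT_zero, TT_zero] at this; omega
  have hsmu : (down eta).sum + 1 = eta.sum := by
    have := hmu 0; rw [TT_zero, TT_zero, if_pos (by omega)] at this; exact this
  obtain ⟨th, hth, _, hths, hthT⟩ := exists_collapse PType.C (down eta) (fun _ => by omega)
  have hlow : ∀ j, j ≤ minPart eta → TT eta j + j * Multiset.card eta = eta.sum :=
    fun j hj => TT_low eta j fun p hp => hj.trans (minPart_le hp)
  have hpar : ∀ j, (j * Multiset.card eta) % 2 = j % 2 := by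
    intro j; rw [Nat.mul_mod, hcard]; simp
  have hle' : ∀ j, TT th j ≤ TT (down eta) j := fun j => by rw [hthT]; exact GG_le _ _ _
  have hge : ∀ j, TT eta j ≤ TT th j + 1 := by
    intro j
    have hmj := hmu j
    by_cases hj : j < minPart eta
    · rw [if_pos hj] at hmj
      have h1 := hlow j hj.le
      have h1p := hpar j
      have h2 : TT th j = TT (down eta) j := by
        rw [hthT j]
        by_cases hj2 : j % 2 = 0
        · exact GG_even _ _ _ hj2 (by omega)
        · unfold GG
          have hj3 : ¬ j % 2 = eX PType.C := hj2
          rw [if_neg hj3, if_neg (by omega)]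
          apply min_eq_left
          have h3 := hlow (j - 1) (by omega)
          have h4 := hlow (j + 1) (by omega)
          have h3p := hpar (j - 1)
          have h4p := hpar (j + 1)
          have h5 := hmu (j - 1)
          rw [if_pos (by omega)] at h5
          have h6 := hmu (j + 1)
          have h7 : (j + 1) * Multiset.card eta = j * Multiset.card eta + Multiset.card eta := by
            ring
          have h8 : (j - 1) * Multiset.card eta + Multiset.card eta = j * Multiset.card eta := by
            rw [← Nat.succ_mul]; congr 1; omega
          split_ifs at h6 <;> omega
      omega
    · rw [if_neg hj] at hmj
      have := GG_ge (eX PType.C) (down eta) j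
      rw [← hthT j] at this
      omega
  unfold dS
  simp only
  rw [hth]
  have hTk : ∀ a, TT (nu + th) a = (n2 - a) + (1 - a) + TT th a := by
    intro a; rw [TT_add, hnu]; simp [TT]
  have hks : (down l).sum = (nu + th).sum := by
    have := hTk 0; rw [TT_zero, TT_zero] at this; omega
  apply outer PType.C hIn hks
  · intro j
    have h1 := TT_add_HH (down l) j
    have h2 := TT_add_HH (nu + th) j
    have h3 := hTk j
    have h4 := hTl j
    have h5 := hle' j
    have h6 := hmu j
    rcases Nat.eq_zero_or_pos j with rfl | hj
    · rw [HH_zero, HH_zero]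
    · have := hTt1 j hj
      omega
  · intro s hs hcor hsk
    have hTs : ∀ j, TT (nu + th) j ≤ TT s j := by
      intro j
      have h1 := TT_add_HH s j
      have h2 := TT_add_HH (nu + th) j
      have := hsk j
      omega
    have hTs1 : ∀ j, TT l j ≤ TT s j + 1 := by
      intro j
      have h1 := hTs j
      have h2 := hTk j
      have h3 := hTl j
      have h4 := hge j
      omega
    have main : ∀ k j, l.sum ≤ j + k → 1 ≤ j → TT l j ≤ TT s j := by
      intro k
      induction k with
      | zero => intro j hj _; rw [TT_large l (by omega)]; omega
      | succ k ih =>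
        intro j hj hj1
        by_contra hlt
        have i1 := ih (j + 1) (by omega) (by omega)
        have i2 := hTs1 (j - 1)
        have i3 := hTs1 j
        have a1 := TT_succ s (j - 1)
        have a2 := TT_succ l (j - 1)
        rw [Nat.sub_add_cancel hj1] at a1 a2
        have a3 := TT_succ s j
        have a4 := TT_succ l j
        have a5 := height_anti l (by omega : j ≤ j + 1)
        have c := hcor j (by omega)
        simp only [eX] at c
        have a6 := TT_add_HH s j
        have hTl1 : TT l j % 2 = 1 := by omega
        have hj2 : j % 2 = 0 := by
          by_contra hh; have := hTodd j (by omega); omega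
        have hjn : j < n2 := by
          by_contra hh; have := habove j (by omega); omega
        have b1 := hTl j
        have b2 := hTk j
        have b3 := hTs j
        have b4 := hmu j
        by_cases hjm : j < minPart eta
        · have h1 := hlow j hjm.le
          have h1p := hpar j
          omega
        · rw [if_neg hjm] at b4
          have h1 : TT th j = TT (down eta) j := by
            rw [hthT j]; exact GG_even _ _ _ hj2 (by omega)
          omega
    intro j
    rcases Nat.eq_zero_or_pos j with rfl | hj
    · rw [HH_zero, HH_zero]
    · have h0 := main l.sum j (by omega) hj
      have h1 := TT_add_HH (down l) j
      have h2 := TT_add_HH s j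
      have h3 := hTt1 j hj
      omega

/-- Type C. -/
theorem typeC (nu eta : Ptn) (n2 : ℕ) (hnu : nu = {n2})
    (hP : InP PType.C (nu + eta)) (hsum : (nu + eta).sum % 2 = 0)
    (heven : n2 % 2 = 0)
    (hL : LargestWith (nu + eta) Even n2)
    (hsp : ∀ a ∈ nu + eta, a % 2 = 1 → a ≤ n2 → height (nu + eta) a % 2 = 1) :
    InP PType.B (transpose (up (nu + eta))) ∧
      (transpose (up (nu + eta))).sum = (nu + eta).sum + 1 ∧
      dS PType.C nu eta = transpose (up (nu + eta)) := by
  have hTl : ∀ a, TT (nu + eta) a = (n2 - a) + TT eta a := by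
    intro a; rw [TT_add, hnu]; simp [TT]
  have hhl : ∀ a, height (nu + eta) a = (if a ≤ n2 then 1 else 0) + height eta a := by
    intro a
    rw [hnu, Multiset.singleton_add, height_cons]
  have hPart := hP.1
  have hTev : ∀ a, a % 2 = 0 → TT (nu + eta) a % 2 = 0 := ((InP_iff _ _).1 hP).2
  have hsub : ∀ a ∈ eta, a ∈ nu + eta := fun a ha => Multiset.mem_add.2 (Or.inr ha)
  set l := nu + eta with hl
  have hl0 : l ≠ 0 := by rintro h; have := hL.1; rw [h] at this; simp at this
  have hmm := maxPart_mem hl0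
  have hmge := maxPart_ge l
  have hn2m := hmge _ hL.1
  set m := maxPart l with hm
  have hn2h := Nat.even_iff.1 hL.2.1
  have habove : ∀ c, n2 < c → c ≤ m → height l c % 2 = 1 := by
    intro c hc hcm
    by_contra hh
    exact height_above hL hc (height_pos hmm hcm) (Nat.even_iff.2 (by omega))
  have hTm : TT l m = 0 := TT_eq_zero l hmge
  have hm1 : height l (m + 1) = 0 := height_eq_zero l fun p hp => by have := hmge p hp; omega
  have hmeven : m % 2 = 0 := by
    rcases Nat.eq_or_lt_of_le hn2m with h | h
    · omega
    · by_contra hh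
      have h1 := habove m h le_rfl
      have h2 := height_succ l m
      have h3 := Nat.even_iff.1 (hP.2 m (Nat.odd_iff.2 (by omega)))
      omega
  have hTab : ∀ j, n2 ≤ j → j ≤ m → TT l j % 2 = (m - j) % 2 := by
    intro j h1 h2
    apply TT_parity_odd l m (m - j) hTm j (by omega)
    intro c h3 h4; exact habove c (by omega) h4
  have hme : m ∈ eta := by
    rcases Nat.eq_or_lt_of_le hn2m with h | h
    · rw [← Multiset.count_pos]
      have h1 := hhl m
      rw [if_pos (by omega)] at h1
      have h2 := height_succ eta m
      have h3 := hhl (m + 1)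
      rw [h] at hn2h
      omega
    · rw [hl, Multiset.mem_add, hnu, Multiset.mem_singleton] at hmm
      rcases hmm with h1 | h1
      · omega
      · exact h1
  have he0 : eta ≠ 0 := by rintro h; rw [h] at hme; simp at hme
  have hmax : maxPart eta = m :=
    le_antisymm (hmge _ (hsub _ (maxPart_mem he0))) (maxPart_ge eta m hme)
  have hTt := TT_up hl0
  rw [← hm] at hTt
  have hmu := TT_up he0
  rw [hmax] at hmu
  have hts : (up l).sum = l.sum + 1 := by
    have := hTt 0; rw [TT_zero, TT_zero, if_pos (by omega)] at this; exact this
  have hIn : InP PType.B (transpose (up l)) := by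
    apply corner_conv
    intro j hj hj0
    have h1 := TT_add_HH (up l) j
    have h2 := hTt j
    simp only [eX]
    rcases mem_up hj with hjm | hjl
    · have h3 := TT_eq_zero l (a := j) (fun p hp => by have := hmge p hp; omega)
      rw [if_neg (by omega)] at h2
      omega
    · have hjm := hmge j hjl
      rw [if_pos hjm] at h2
      by_cases hpar : j % 2 = 0
      · have := hTev j hpar; omega
      · by_cases hle : j ≤ n2
        · have h3 := hsp j hjl (by omega) hle
          have h4 := hTev (j - 1) (by omega)
          have h5 := TT_succ l (j - 1)
          rw [Nat.sub_add_cancel hj0] at h5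
          omega
        · have := hTab j (by omega) hjm
          omega
  refine ⟨hIn, by rw [sum_transpose]; omega, ?_⟩
  have hsume : l.sum = n2 + eta.sum := by
    have := hTl 0; rw [TT_zero, TT_zero] at this; omega
  have hsmu : (up eta).sum = eta.sum + 1 := by
    have := hmu 0; rw [TT_zero, TT_zero, if_pos (by omega)] at this; exact this
  obtain ⟨th, hth, _, hths, hthT⟩ :=
    exists_collapse PType.B (up eta) (fun h => by simp [eX] at h)
  have hle' : ∀ j, TT th j ≤ TT (up eta) j := fun j => by rw [hthT]; exact GG_le _ _ _
  have hge : ∀ j, TT (up eta) j ≤ TT th j + 1 := fun j => by rw [hthT]; exact GG_ge _ _ _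
  unfold dS
  simp only
  rw [hth]
  have hTk : ∀ a, TT (nu + th) a = (n2 - a) + TT th a := by
    intro a; rw [TT_add, hnu]; simp [TT]
  have hks : (up l).sum = (nu + th).sum := by
    have := hTk 0; rw [TT_zero, TT_zero] at this; omega
  apply outer PType.B hIn hks
  · intro j
    have h1 := TT_add_HH (up l) j
    have h2 := TT_add_HH (nu + th) j
    have h3 := hTk j
    have h4 := hTl j
    have h5 := hle' j
    have h6 := hmu j
    have h7 := hTt j
    omega
  · intro s hs hcor hsk
    have hTs : ∀ j, TT (nu + th) j ≤ TT s j := by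
      intro j
      have h1 := TT_add_HH s j
      have h2 := TT_add_HH (nu + th) j
      have := hsk j
      omega
    have hTs1 : ∀ j, TT l j ≤ TT s j := by
      intro j
      have h1 := hTs j
      have h2 := hTk j
      have h3 := hTl j
      have h4 := hge j
      have h5 := hmu j
      by_cases hjm : j ≤ m
      · rw [if_pos hjm] at h5; omega
      · rw [TT_eq_zero l (a := j) (fun p hp => by have := hmge p hp; omega)]; omega
    have main : ∀ j, TT (up l) j ≤ TT s j := by
      intro j
      induction j with
      | zero => rw [TT_zero, TT_zero]; omega
      | succ i ih =>
        have t1 := hTt i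
        have t2 := hTt (i + 1)
        have i1 := hTs1 (i + 1)
        have i2 := hTs1 (i + 1 + 1)
        by_cases hjm : i + 1 ≤ m
        · rw [if_pos (by omega)] at t1 t2
          by_contra hlt
          have a1 := TT_succ s i
          have a2 := TT_succ l i
          have a3 := TT_succ s (i + 1)
          have a4 := TT_succ l (i + 1)
          have a5 := height_anti l (by omega : i + 1 ≤ i + 1 + 1)
          have c := hcor (i + 1) (by omega)
          simp only [eX] at c
          have a6 := TT_add_HH s (i + 1)
          have hj2 : (i + 1) % 2 = 1 := by
            by_contra hh; have := hTev (i + 1) (by omega); omega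
          have hjn : i + 1 < n2 := by
            by_contra hh; have := hTab (i + 1) (by omega) hjm; omega
          have b1 := hTl (i + 1)
          have b2 := hTk (i + 1)
          have b3 := hTs (i + 1)
          have b4 := hmu (i + 1)
          rw [if_pos hjm] at b4
          have h1 : TT th (i + 1) = TT (up eta) (i + 1) := by
            rw [hthT]; exact GG_even _ _ _ hj2 (by omega)
          omega
        · rw [if_neg hjm] at t2; omega
    intro j
    have h0 := main j
    have h1 := TT_add_HH (up l) j
    have h2 := TT_add_HH s j
    omega

/-- Type D. -/
theorem typeD (nu eta : Ptn) (n2 : ℕ) (hn : 1 < n2) (hnu : nu = {n2, 1})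
    (hP : InP PType.D (nu + eta)) (hsum : (nu + eta).sum % 2 = 0)
    (hodd : n2 % 2 = 1)
    (hL : LargestWith (nu + eta) Even n2)
    (hsp : ∀ a ∈ nu + eta, a % 2 = 0 → a ≤ n2 → height (nu + eta) a % 2 = 1) :
    InP PType.D (transpose (down (up (nu + eta)))) ∧
      (transpose (down (up (nu + eta)))).sum = (nu + eta).sum ∧
      dS PType.D nu eta = transpose (down (up (nu + eta))) := by
  have hTl : ∀ a, TT (nu + eta) a = (n2 - a) + (1 - a) + TT eta a := by
    intro a; rw [TT_add, hnu]; simp [TT]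
  have hhl : ∀ a, height (nu + eta) a =
      (if a ≤ n2 then 1 else 0) + (if a ≤ 1 then 1 else 0) + height eta a := by
    intro a
    rw [height_add, hnu, show ({n2, 1} : Ptn) = n2 ::ₘ 1 ::ₘ 0 from rfl, height_cons, height_cons,
      height_zero']
    omega
  have hPart := hP.1
  have hTodd : ∀ a, a % 2 = 1 → TT (nu + eta) a % 2 = 0 := ((InP_iff _ _).1 hP).2
  have h1mem : 1 ∈ nu + eta := by rw [hnu]; simp
  have hsub : ∀ a ∈ eta, a ∈ nu + eta := fun a ha => Multiset.mem_add.2 (Or.inr ha)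
  set l := nu + eta with hl
  have hl0 : l ≠ 0 := by rintro h; rw [h] at h1mem; simp at h1mem
  have hmm := maxPart_mem hl0
  have hmge := maxPart_ge l
  have hn2m := hmge _ hL.1
  set m := maxPart l with hm
  have habove : ∀ c, n2 < c → c ≤ m → height l c % 2 = 1 := by
    intro c hc hcm
    by_contra hh
    exact height_above hL hc (height_pos hmm hcm) (Nat.even_iff.2 (by omega))
  have hTm : TT l m = 0 := TT_eq_zero l hmge
  have hm1 : height l (m + 1) = 0 := height_eq_zero l fun p hp => by have := hmge p hp; omega
  have hmodd : m % 2 = 1 := by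
    rcases Nat.eq_or_lt_of_le hn2m with h | h
    · omega
    · by_contra hh
      have h1 := habove m h le_rfl
      have h2 := height_succ l m
      have h3 := Nat.even_iff.1 (hP.2 m (Nat.even_iff.2 (by omega)))
      omega
  have hTab : ∀ j, n2 ≤ j → j ≤ m → TT l j % 2 = (m - j) % 2 := by
    intro j h1 h2
    apply TT_parity_odd l m (m - j) hTm j (by omega)
    intro c h3 h4; exact habove c (by omega) h4
  have hup1 : 1 ∈ up l := by
    unfold up
    rw [← hm, Multiset.mem_cons]
    right
    exact (Multiset.mem_erase_of_ne (by omega)).2 h1mem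
  have hupP : IsPartition (up l) := by
    intro a ha
    rcases mem_up ha with h | h
    · omega
    · exact hPart a h
  have hup0 : up l ≠ 0 := by rintro h; rw [h] at hup1; simp at hup1
  have hmin : minPart (up l) = 1 := minPart_eq hup1 hupP
  have hTu := TT_up hl0
  rw [← hm] at hTu
  have hTd := TT_down hup0 hupP
  rw [hmin] at hTd
  have hts : (down (up l)).sum = l.sum := by
    have h1 := hTd 0
    have h2 := hTu 0
    rw [TT_zero, TT_zero, if_pos (by omega)] at h1 h2
    omega
  have hHt : ∀ j, HH (down (up l)) j + (if 1 ≤ j ∧ j ≤ m then 1 else 0) = HH l j := by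
    intro j
    have h1 := hTd j
    have h2 := hTu j
    have h3 := TT_add_HH (down (up l)) j
    have h4 := TT_add_HH l j
    split_ifs at * <;> omega
  have hIn : InP PType.D (transpose (down (up l))) := by
    apply corner_conv
    intro j hj hj0
    have h1 := hHt j
    have h2 := TT_add_HH l j
    simp only [eX]
    rcases mem_up (mem_down_one hmin hj) with hjm | hjl
    · have h3 := TT_eq_zero l (a := j) (fun p hp => by have := hmge p hp; omega)
      rw [if_neg (by omega)] at h1
      omega
    · have hjm := hmge j hjl
      rw [if_pos ⟨hj0, hjm⟩] at h1
      by_cases hpar : j % 2 = 1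
      · have := hTodd j hpar; omega
      · by_cases hle : j ≤ n2
        · have h3 := hsp j hjl (by omega) hle
          have h4 := hTodd (j - 1) (by omega)
          have h5 := TT_succ l (j - 1)
          rw [Nat.sub_add_cancel hj0] at h5
          omega
        · have := hTab j (by omega) hjm
          omega
  refine ⟨hIn, by rw [sum_transpose]; omega, ?_⟩
  have hsume : l.sum = n2 + 1 + eta.sum := by
    have := hTl 0; rw [TT_zero, TT_zero] at this; omega
  obtain ⟨th, hth, hthP, hths, hthT⟩ :=
    exists_collapse PType.D (transpose eta) (fun h => by simp [eX] at h)
  rw [sum_transpose] at hths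
  have hle' : ∀ j, TT th j ≤ TT (transpose eta) j := fun j => by rw [hthT]; exact GG_le _ _ _
  have hge : ∀ j, TT (transpose eta) j ≤ TT th j + 1 := fun j => by
    rw [hthT]; exact GG_ge _ _ _
  have hthev := ((InP_iff _ _).1 hthP).2
  have hHeta : ∀ j, psum (transpose eta) j = HH eta j := psum_transpose eta
  have hHth : ∀ j, HH (transpose th) j = psum th j := HH_transpose th
  have hHle : ∀ j, psum th j ≤ HH eta j := by
    intro j; rw [← hHeta]; exact dom_of_TT hle' j
  have hHge : ∀ j, HH eta j ≤ psum th j + 1 := by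
    intro j
    obtain ⟨a, ha⟩ := exists_psum_eq th j
    have h1 := psum_le (transpose eta) j a
    rw [hHeta] at h1
    have := hge a
    omega
  have hHbig : ∀ j, m < j → HH eta j ≤ psum th j := by
    intro j hj
    have hle : HH eta j ≤ eta.sum := by have := TT_add_HH eta j; omega
    obtain ⟨a, ha⟩ := exists_psum_eq th j
    rcases Nat.eq_zero_or_pos a with h0 | h0
    · rw [h0, TT_zero] at ha; omega
    · have h1 := psum_le (transpose eta) (j - 1) a
      rw [hHeta] at h1
      have h2 := TT_add_HH eta (j - 1)
      rw [TT_eq_zero eta (fun p hp => by have := hmge p (hsub p hp); omega)] at h2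
      have h3 := hge a
      have h4 : j * a = (j - 1) * a + a := by
        rw [← Nat.succ_mul]; congr 1; omega
      omega
  have hHl : ∀ j, HH l j = min n2 j + min 1 j + HH eta j := by
    intro j; rw [hl, HH_add, hnu]; simp [HH]
  unfold dS
  simp only
  rw [hth]
  have hHk : ∀ j, HH (nu + transpose th) j = min n2 j + min 1 j + psum th j := by
    intro j; rw [HH_add, hHth, hnu]; simp [HH]
  have hks : (down (up l)).sum = (nu + transpose th).sum := by
    rw [hts, hl, Multiset.sum_add, Multiset.sum_add, sum_transpose, hths]
  apply outer PType.D hIn hks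
  · intro j
    have h1 := hHt j
    have h2 := hHl j
    have h3 := hHk j
    have h4 := hHge j
    rcases Nat.eq_zero_or_pos j with rfl | hj
    · rw [HH_zero, HH_zero]
    · by_cases hjm : j ≤ m
      · rw [if_pos ⟨hj, hjm⟩] at h1; omega
      · have := hHbig j (by omega); omega
  · intro s hs hcor hsk j
    have hsl : ∀ j, HH s j ≤ HH l j := by
      intro j
      have h1 := hsk j
      have h2 := hHl j
      have h3 := hHk j
      have h4 := hHle j
      omega
    induction j with
    | zero => rw [HH_zero, HH_zero]
    | succ i ih =>
      have t1 := hHt i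
      have t2 := hHt (i + 1)
      have i1 := hsl (i + 1)
      have i2 := hsl (i + 1 + 1)
      by_cases hjm : i + 1 ≤ m
      · rw [if_pos ⟨by omega, hjm⟩] at t2
        by_contra hlt
        have a1 := HH_succ s i
        have a2 := HH_succ l i
        have a3 := HH_succ s (i + 1)
        have a4 := HH_succ l (i + 1)
        have a5 := height_succ l (i + 1)
        have hcorner : height s (i + 1 + 1) < height s (i + 1) := by
          rcases Nat.eq_zero_or_pos i with h0 | h0
          · subst h0
            have h2 := Multiset.count_pos.2 h1mem
            simp only [zero_add] at *
            rw [HH_zero] at *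
            omega
          · rw [if_pos ⟨h0, by omega⟩] at t1; omega
        have c := hcor (i + 1) hcorner
        simp only [eX] at c
        have a6 := TT_add_HH l (i + 1)
        have hj2 : (i + 1) % 2 = 0 := by
          by_contra hh; have := hTodd (i + 1) (by omega); omega
        have hjn : i + 1 < n2 := by
          by_contra hh; have := hTab (i + 1) (by omega) hjm; omega
        have b0 := hTodd i (by omega)
        have b1 := TT_succ l i
        have b2 := hhl (i + 1)
        rw [if_pos (by omega), if_neg (by omega)] at b2
        have hk := HH_transpose_TT eta (Or.inr (le_refl (height eta (i + 1))))
          (height_anti eta (by omega : i + 1 ≤ i + 1 + 1))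
        have b3 := hthev (height eta (i + 1)) (by simp only [eX]; omega)
        have b4 := hle' (height eta (i + 1))
        have b5 := psum_le th (i + 1) (height eta (i + 1))
        have b6 : (i + 1) * height eta (i + 1) = height eta (i + 1) * (i + 1) := mul_comm _ _
        have b7 : (height eta (i + 1) * (i + 1)) % 2 = 0 := by
          rw [Nat.mul_mod, hj2]; simp
        have b8 := hHl (i + 1)
        have b9 := hHk (i + 1)
        have b10 := hsk (i + 1)
        omega
      · rw [if_neg (by omega)] at t2; omega

theorem height_pair {n2 n1 a : ℕ} :
    height ({n2, n1} : Ptn) a = (if a ≤ n2 then 1 else 0) + (if a ≤ n1 then 1 else 0) := by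
  rw [show ({n2, n1} : Ptn) = n2 ::ₘ n1 ::ₘ 0 from rfl, height_cons, height_cons, height_zero']
  omega

theorem minPart_pair {n2 n1 : ℕ} (h : n1 < n2) : minPart ({n2, n1} : Ptn) = n1 := by
  apply minPart_eq
  · simp
  · intro p hp
    simp at hp
    omega

/-- From the proof of Lemma 5.6 of the paper: for a special ultrabasic block the collapse
in the simplified formula for `d_S` on basic blocks is unnecessary. -/
theorem dS_special_ultrabasic (X : PType) (nu eta : Ptn)
    (h : Ultrabasic X nu eta)
    (hr : Reduced X (nu + eta) nu)
    (hsp : SpecialMP X (nu + eta) nu) :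
    (X = PType.B →
      InP PType.C (transpose (down (nu + eta))) ∧
      (transpose (down (nu + eta))).sum = (nu + eta).sum - 1 ∧
      dS X nu eta = transpose (down (nu + eta))) ∧
    (X = PType.C →
      InP PType.B (transpose (up (nu + eta))) ∧
      (transpose (up (nu + eta))).sum = (nu + eta).sum + 1 ∧
      dS X nu eta = transpose (up (nu + eta))) ∧
    (X = PType.D →
      InP PType.D (transpose (down (up (nu + eta)))) ∧
      (transpose (down (up (nu + eta)))).sum = (nu + eta).sum ∧
      dS X nu eta = transpose (down (up (nu + eta)))) := by
  obtain ⟨⟨⟨hP, hsum, hmark, -⟩, hblock⟩, hultra⟩ := h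
  refine ⟨?_, ?_, ?_⟩
  · rintro rfl
    rcases hblock with ⟨n1, n2, hlt, hnu, -, hL⟩ | ⟨h, -⟩
    swap
    · simp at h
    have hn1 : n1 ≤ 1 := by
      rw [hnu, minPart_pair hlt] at hultra
      exact hultra (by simp)
    have hm1 := (hmark n1 (by rw [hnu]; simp)).2
    have hm2 := (hmark n2 (by rw [hnu]; simp)).2
    have hr1 := (hr n1 (by rw [hnu]; simp)).2.2
    simp only [markParity, Nat.odd_iff] at hm1 hm2
    have h1 : n1 = 1 := by omega
    subst h1
    simp only [Nat.odd_iff] at hr1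
    refine typeB nu eta n2 hlt hnu hP (Nat.odd_iff.1 hsum) hm2 hr1 hL ?_
    intro a ha ha2 hle
    by_contra hh
    have h2 := hsp a ha ⟨Nat.even_iff.2 ha2, Nat.odd_iff.2 (by omega)⟩
    have h3 := hP.1 a ha
    rw [hnu, height_pair, if_pos hle, if_neg (by omega)] at h2
    simp at h2
  · rintro rfl
    rcases hblock with ⟨n1, n2, hlt, hnu, -, hL⟩ | ⟨-, n2, hnu, hL⟩
    · exfalso
      have hn1 : n1 ≤ 1 := by
        rw [hnu, minPart_pair hlt] at hultra
        exact hultra (by simp)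
      have hm1 := (hmark n1 (by rw [hnu]; simp)).2
      simp only [markParity, Nat.even_iff] at hm1
      have := hP.1 n1 (by rw [hnu]; simp)
      omega
    · have hm2 := (hmark n2 (by rw [hnu]; simp)).2
      simp only [markParity, Nat.even_iff] at hm2
      refine typeC nu eta n2 hnu hP (Nat.even_iff.1 hsum) hm2 hL ?_
      intro a ha ha2 hle
      by_contra hh
      have h2 := hsp a ha ⟨Nat.odd_iff.2 ha2, Nat.even_iff.2 (by omega)⟩
      rw [hnu, show ({n2} : Ptn) = n2 ::ₘ 0 from rfl, height_cons, height_zero', if_pos hle] at h2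
      simp at h2
  · rintro rfl
    rcases hblock with ⟨n1, n2, hlt, hnu, -, hL⟩ | ⟨h, -⟩
    swap
    · simp at h
    have hn1 : n1 ≤ 1 := by
      rw [hnu, minPart_pair hlt] at hultra
      exact hultra (by simp)
    have hm1 := (hmark n1 (by rw [hnu]; simp)).2
    have hm2 := (hmark n2 (by rw [hnu]; simp)).2
    simp only [markParity, Nat.odd_iff] at hm1 hm2
    have h1 : n1 = 1 := by omega
    subst h1
    refine typeD nu eta n2 hlt hnu hP (Nat.even_iff.1 hsum) hm2 hL ?_
    intro a ha ha2 hle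
    by_contra hh
    have h2 := hsp a ha ⟨Nat.even_iff.2 ha2, Nat.even_iff.2 (by omega)⟩
    have h3 := hP.1 a ha
    rw [hnu, height_pair, if_pos hle, if_neg (by omega)] at h2
    simp at h2

end NilDual
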